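/- Let ω be a nondegenerate alternating bilinear form on a finite-dimensional K-vector space V, and let A, U ⊆ V be subspaces such that A ∩ A^⊥ = {0} and dim(A ∩ U) + 1 ≥ dim U. Then dim(A + U^⊥) + 1 ≥ dim V. (Linear-algebra core of the proof of the paper's Lemma [lm:proj-def], establishing the inequality (eq:dual-ver): A abstracts the annihilator of ι*(TM), which is a symplectic subspace by Avila–Eskin–Möller, and U abstracts the span u(V) of the circumference curves of an M-parallel class of cylinders, which meets A in codimension at most one.) -/

import Mathlib

open Module

/-- For a bilinear form `ω` on `V` and a subspace `S ⊆ V`, the perp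
`S^⊥ = {v ∈ V : ω(v, s) = 0 for all s ∈ S}`. -/
def perp {K V : Type*} [Field K] [AddCommGroup V] [Module K V]
    (ω : V →ₗ[K] V →ₗ[K] K) (S : Submodule K V) : Submodule K V where
  carrier := {v | ∀ s ∈ S, ω v s = 0}
  add_mem' := by
    intro a b ha hb s hs
    simp [ha s hs, hb s hs]
  zero_mem' := by
    intro s hs
    simp
  smul_mem' := by
    intro c v hv s hs
    simp [hv s hs]

/-- Linear-algebra core of the proof of Lemma `lm:proj-def` (inequality (eq:dual-ver)):
if `ω` is a nondegenerate alternating bilinear form on a finite-dimensional `V`,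
`A ∩ A^⊥ = 0` and `dim(A ∩ U) + 1 ≥ dim U`, then `dim(A + U^⊥) + 1 ≥ dim V`. -/
theorem dim_sup_perp_ge {K V : Type*} [Field K] [AddCommGroup V] [Module K V]
    [FiniteDimensional K V]
    (ω : V →ₗ[K] V →ₗ[K] K)
    (halt : ∀ v : V, ω v v = 0)
    (hnd : ∀ v : V, (∀ w : V, ω v w = 0) → v = 0)
    (A U : Submodule K V)
    (hA : A ⊓ perp ω A = ⊥)
    (hU : finrank K ↥(A ⊓ U) + 1 ≥ finrank K ↥U) :
    finrank K ↥(A ⊔ perp ω U) + 1 ≥ finrank K V := by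
  have halt' : LinearMap.BilinForm.IsAlt ω := halt
  have hrefl : LinearMap.BilinForm.IsRefl ω := halt'.isRefl
  have hN : LinearMap.BilinForm.Nondegenerate ω := by
    refine ⟨fun v hv => hnd v hv, fun v hv => hnd v fun w => hrefl w v (hv w)⟩
  have hperp : ∀ S : Submodule K V, perp ω S = LinearMap.BilinForm.orthogonal ω S := by
    intro S
    ext v
    rw [LinearMap.BilinForm.mem_orthogonal_iff]
    exact ⟨fun h s hs => hrefl v s (h s hs), fun h s hs => hrefl s v (h s hs)⟩
  rw [hperp] at hA ⊢
  have h1 := LinearMap.BilinForm.finrank_orthogonal hN (A ⊔ LinearMap.BilinForm.orthogonal ω U)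
  have h2 : LinearMap.BilinForm.orthogonal ω (A ⊔ LinearMap.BilinForm.orthogonal ω U) ≤
      LinearMap.BilinForm.orthogonal ω A ⊓ U := by
    refine le_inf (LinearMap.BilinForm.orthogonal_le le_sup_left) ?_
    refine (LinearMap.BilinForm.orthogonal_le le_sup_right).trans ?_
    rw [LinearMap.BilinForm.orthogonal_orthogonal hN hrefl]
  have h3 := Submodule.finrank_mono h2
  have h4 := Submodule.finrank_sup_add_finrank_inf_eq (A ⊓ U)
    (LinearMap.BilinForm.orthogonal ω A ⊓ U)
  have h5 : (A ⊓ U) ⊓ (LinearMap.BilinForm.orthogonal ω A ⊓ U) = ⊥ := by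
    rw [eq_bot_iff, ← hA]
    exact inf_le_inf inf_le_left inf_le_left
  rw [h5, finrank_bot] at h4
  have h6 : finrank K ↥((A ⊓ U) ⊔ (LinearMap.BilinForm.orthogonal ω A ⊓ U)) ≤ finrank K U :=
    Submodule.finrank_mono (sup_le inf_le_right inf_le_right)
  omega
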